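/- Let ρ ∈ [0,1], Δ > 0, F ∈ ℝ^{M×N}, y ∈ ℝ^M. A point (R,Σ,a,c) with all Σ_i > 0 is a stationary point of the unconstrained mean-field free energy F_MF (i.e., all partial derivatives with respect to each R_i, each Σ_i, each a_i and each c_i vanish) if and only if for every i: (i) 1/Σ_i² = ∑_μ F_{μi}²/Δ, (ii) R_i = a_i + (Σ_i²/Δ)·∑_μ F_{μi}·(y_μ − ∑_j F_{μj} a_j), (iii) a_i = f_a(R_i,Σ_i), and (iv) c_i = f_c(R_i,Σ_i). -/

import Mathlib

open MeasureTheory ProbabilityTheory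

/-- The prior `P₀ = ρ·N(0,1) + (1-ρ)·δ₀`. -/
noncomputable def P0 (ρ : ℝ) : Measure ℝ :=
  ENNReal.ofReal ρ • gaussianReal 0 1 + ENNReal.ofReal (1 - ρ) • Measure.dirac 0

/-- Partition function `Z(R,Σ) = ∫ exp(-(x-R)²/(2Σ²)) dP₀(x)`. -/
noncomputable def Zpart (ρ R σ : ℝ) : ℝ :=
  ∫ x, Real.exp (-(x - R) ^ 2 / (2 * σ ^ 2)) ∂(P0 ρ)

/-- Posterior mean `f_a(R,Σ)`. -/
noncomputable def fa (ρ R σ : ℝ) : ℝ :=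
  (Zpart ρ R σ)⁻¹ * ∫ x, x * Real.exp (-(x - R) ^ 2 / (2 * σ ^ 2)) ∂(P0 ρ)

/-- Posterior variance `f_c(R,Σ)`. -/
noncomputable def fc (ρ R σ : ℝ) : ℝ :=
  (Zpart ρ R σ)⁻¹ * (∫ x, x ^ 2 * Real.exp (-(x - R) ^ 2 / (2 * σ ^ 2)) ∂(P0 ρ))
    - fa ρ R σ ^ 2

/-- The (unconstrained) mean-field free energy `F_MF(R,Σ,a,c)`. -/
noncomputable def FMF (ρ : ℝ) {M N : ℕ} (F : Fin M → Fin N → ℝ) (y : Fin M → ℝ)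
    (Δ : ℝ) (R Sv a c : Fin N → ℝ) : ℝ :=
  (M : ℝ) / 2 * Real.log (2 * Real.pi * Δ)
    + 1 / (2 * Δ) * ∑ μ, ((y μ - ∑ i, F μ i * a i) ^ 2 + ∑ i, F μ i ^ 2 * c i)
    - ∑ i, (Real.log (Zpart ρ (R i) (Sv i)) + (c i + (a i - R i) ^ 2) / (2 * Sv i ^ 2))

/-!
The local weight `exp (-(x - R)² / (2σ²))` makes `f_a` and `f_c` the mean and the variance of an
exponential tilt of the prior. Up to a quadratic in `R`, `log Z` is a cumulant generating function
of `x` in the variable `R / σ²`; it is also one of `(x - R)²` in the variable `-1 / (2σ²)`. Hence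
`∂_R log Z = (f_a - R) / σ²` and `∂_σ log Z = (f_c + (f_a - R)²) / σ³`. The free energy couples
the sites only through the residual, which depends on `a` and `c` alone. So `∂_R = 0` says
`a = f_a`, and then `∂_σ = 0` says `c = f_c`, while `∂_c = 0` and `∂_a = 0` determine `σ` and `R`.
-/

section Calculus

variable {𝕜 E : Type*} [NontriviallyNormedField 𝕜] [NormedAddCommGroup E] [NormedSpace 𝕜 E]

lemma hasDerivAt_iff_eq {f : 𝕜 → E} {d d' : E} {x : 𝕜} (h : HasDerivAt f d x) :
    HasDerivAt f d' x ↔ d = d' :=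
  ⟨h.unique, h.congr_deriv⟩

lemma hasDerivAt_sum_update {ι : Type*} [Fintype ι] [DecidableEq ι] {g : ι → 𝕜 → E}
    {v : ι → 𝕜} {i : ι} {d : E} (h : HasDerivAt (g i) d (v i)) :
    HasDerivAt (fun t => ∑ j, g j (Function.update v i t j)) d (v i) := by
  have hterm : ∀ j ∈ Finset.univ,
      HasDerivAt (fun t => g j (Function.update v i t j)) (if j = i then d else 0) (v i) := by
    intro j _
    rcases eq_or_ne j i with rfl | hj
    · simpa using h
    · simpa [hj] using hasDerivAt_const (v i) (g j (v j))
  simpa using HasDerivAt.fun_sum hterm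

end Calculus

section RandomVariable

variable {Ω : Type*} [MeasurableSpace Ω] {μ : Measure Ω} {X : Ω → ℝ}

lemma hasDerivAt_cgf {t : ℝ} (ht : t ∈ interior (integrableExpSet X μ)) :
    HasDerivAt (cgf X μ) (∫ ω, X ω ∂μ.tilted (t * X ·)) t := by
  rw [integral_tilted_mul_self ht]
  exact (analyticAt_cgf ht).differentiableAt.hasDerivAt

lemma integral_sub_const_sq [IsProbabilityMeasure μ] (hX : MemLp X 2 μ) (r : ℝ) :
    ∫ ω, (X ω - r) ^ 2 ∂μ = Var[X; μ] + (∫ ω, X ω ∂μ - r) ^ 2 := by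
  have hmean : ∫ ω, (X ω - r) ∂μ = ∫ ω, X ω ∂μ - r := by
    simpa using integral_sub (hX.integrable one_le_two) (integrable_const r)
  have hvar : Var[fun ω => X ω - r; μ] = ∫ ω, (X ω - r) ^ 2 ∂μ - (∫ ω, (X ω - r) ∂μ) ^ 2 :=
    variance_eq_sub (hX.sub (memLp_const r))
  rw [← variance_sub_const hX.aestronglyMeasurable r, hvar, hmean, sub_add_cancel]

variable [IsFiniteMeasure μ]

lemma integrable_exp_mul_of_nonpos_of_nonneg {t : ℝ} (ht : t ≤ 0) (hX : AEMeasurable X μ)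
    (hX0 : ∀ᵐ ω ∂μ, 0 ≤ X ω) : Integrable (fun ω => Real.exp (t * X ω)) μ := by
  simpa using integrable_exp_mul_of_le (-t) 0 (neg_nonneg.2 ht) hX.neg
    (hX0.mono fun _ => neg_nonpos.2)

lemma Iio_zero_subset_interior_integrableExpSet (hX : AEMeasurable X μ)
    (hX0 : ∀ᵐ ω ∂μ, 0 ≤ X ω) : Set.Iio 0 ⊆ interior (integrableExpSet X μ) :=
  interior_maximal (fun _ ht => integrable_exp_mul_of_nonpos_of_nonneg (le_of_lt ht) hX hX0)
    isOpen_Iio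

end RandomVariable

/-- The partition function `Z(R, σ)` of a prior `P` observed through the Gaussian weight
`exp (-(x - R)² / (2σ²))`. -/
noncomputable def gaussianPartition (P : Measure ℝ) (R σ : ℝ) : ℝ :=
  ∫ x, Real.exp (-(x - R) ^ 2 / (2 * σ ^ 2)) ∂P

/-- The posterior of a prior `P` observed through the Gaussian weight
`exp (-(x - R)² / (2σ²))`, normalized by `gaussianPartition P R σ`. Its mean and variance are
`f_a(R, σ)` and `f_c(R, σ)`. -/
noncomputable def gaussianPosterior (P : Measure ℝ) (R σ : ℝ) : Measure ℝ :=
  P.tilted fun x => -(x - R) ^ 2 / (2 * σ ^ 2)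

lemma integral_gaussianPosterior (P : Measure ℝ) (R σ : ℝ) (g : ℝ → ℝ) :
    ∫ x, g x ∂gaussianPosterior P R σ =
      (gaussianPartition P R σ)⁻¹ * ∫ x, g x * Real.exp (-(x - R) ^ 2 / (2 * σ ^ 2)) ∂P := by
  rw [gaussianPosterior, integral_tilted, ← integral_const_mul]
  refine integral_congr_ae (.of_forall fun x => ?_)
  simp only [smul_eq_mul, gaussianPartition]
  ring

lemma mgf_id_gaussianPosterior (P : Measure ℝ) (R r : ℝ) {σ : ℝ} (hσ : σ ≠ 0) :
    mgf id (gaussianPosterior P R σ) ((r - R) / σ ^ 2) =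
      Real.exp ((r ^ 2 - R ^ 2) / (2 * σ ^ 2)) * gaussianPartition P r σ
        / gaussianPartition P R σ := by
  rw [mgf, gaussianPosterior, integral_exp_tilted, gaussianPartition, ← integral_const_mul]
  congr 2 with x
  rw [← Real.exp_add, Pi.add_apply, id]
  congr 1
  field_simp
  ring

lemma neg_sub_sq_div_eq_mul (R σ x : ℝ) :
    -(x - R) ^ 2 / (2 * σ ^ 2) = -(2 * σ ^ 2)⁻¹ * (x - R) ^ 2 := by
  ring

section Posterior

variable (P : Measure ℝ) [IsFiniteMeasure P]

lemma integrable_exp_neg_sub_sq_div (R σ : ℝ) :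
    Integrable (fun x => Real.exp (-(x - R) ^ 2 / (2 * σ ^ 2))) P := by
  simp only [neg_sub_sq_div_eq_mul]
  exact integrable_exp_mul_of_nonpos_of_nonneg (neg_nonpos.2 (by positivity)) (by fun_prop)
    (.of_forall fun x => sq_nonneg (x - R))

instance isProbabilityMeasure_gaussianPosterior [NeZero P] (R σ : ℝ) :
    IsProbabilityMeasure (gaussianPosterior P R σ) :=
  isProbabilityMeasure_tilted (integrable_exp_neg_sub_sq_div P R σ)

variable {σ : ℝ}

lemma integrableExpSet_id_gaussianPosterior (R : ℝ) (hσ : σ ≠ 0) :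
    integrableExpSet id (gaussianPosterior P R σ) = Set.univ := by
  refine Set.eq_univ_of_forall fun t => ?_
  refine (integrable_tilted_iff (integrable_exp_neg_sub_sq_div P R σ) _).2 ?_
  refine Integrable.of_bound (by fun_prop) (Real.exp (t * R + t ^ 2 * σ ^ 2 / 2))
    (.of_forall fun x => ?_)
  rw [smul_eq_mul, ← Real.exp_add, Real.norm_of_nonneg (Real.exp_pos _).le, Real.exp_le_exp]
  have completed_square : -(x - R) ^ 2 / (2 * σ ^ 2) + t * id x =
      t * R + t ^ 2 * σ ^ 2 / 2 - (x - R - t * σ ^ 2) ^ 2 / (2 * σ ^ 2) := by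
    simp only [id]
    field_simp
    ring
  rw [completed_square]
  exact sub_le_self _ (by positivity)

lemma zero_mem_interior_integrableExpSet_gaussianPosterior (R : ℝ) (hσ : σ ≠ 0) :
    0 ∈ interior (integrableExpSet id (gaussianPosterior P R σ)) := by
  simp [integrableExpSet_id_gaussianPosterior P R hσ]

lemma memLp_id_gaussianPosterior (R : ℝ) (hσ : σ ≠ 0) :
    MemLp id 2 (gaussianPosterior P R σ) :=
  memLp_of_mem_interior_integrableExpSet
    (zero_mem_interior_integrableExpSet_gaussianPosterior P R hσ) 2

variable [NeZero P]

lemma gaussianPartition_pos (R σ : ℝ) : 0 < gaussianPartition P R σ :=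
  integral_exp_pos (integrable_exp_neg_sub_sq_div P R σ)

lemma log_gaussianPartition_eq_add_cgf (R r : ℝ) (hσ : σ ≠ 0) :
    Real.log (gaussianPartition P r σ) = Real.log (gaussianPartition P R σ)
      - (r ^ 2 - R ^ 2) / (2 * σ ^ 2) + cgf id (gaussianPosterior P R σ) ((r - R) / σ ^ 2) := by
  have hr := gaussianPartition_pos P r σ
  have hR := gaussianPartition_pos P R σ
  rw [cgf, mgf_id_gaussianPosterior P R r hσ, Real.log_div (by positivity) hR.ne',
    Real.log_mul (by positivity) hr.ne', Real.log_exp]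
  ring

lemma hasDerivAt_log_gaussianPartition_loc (R : ℝ) (hσ : σ ≠ 0) :
    HasDerivAt (fun r => Real.log (gaussianPartition P r σ))
      ((∫ x, x ∂gaussianPosterior P R σ - R) / σ ^ 2) R := by
  have hint := zero_mem_interior_integrableExpSet_gaussianPosterior P R hσ
  have hcgf : HasDerivAt (cgf id (gaussianPosterior P R σ))
      (∫ x, x ∂gaussianPosterior P R σ) ((R - R) / σ ^ 2) := by
    simpa using hasDerivAt_cgf hint
  have harg : HasDerivAt (fun r => (r - R) / σ ^ 2) (1 / σ ^ 2) R :=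
    ((hasDerivAt_id R).sub_const R).div_const _
  have hquad : HasDerivAt (fun r => (r ^ 2 - R ^ 2) / (2 * σ ^ 2)) (2 * R / (2 * σ ^ 2)) R := by
    simpa using ((hasDerivAt_pow 2 R).sub_const (R ^ 2)).div_const (2 * σ ^ 2)
  refine (((hquad.const_sub _).add (hcgf.comp R harg)).congr_of_eventuallyEq
    (.of_forall fun r => log_gaussianPartition_eq_add_cgf P R r hσ)).congr_deriv ?_
  field_simp
  ring

lemma hasDerivAt_log_gaussianPartition_scale (R : ℝ) (hσ : σ ≠ 0) :
    HasDerivAt (fun s => Real.log (gaussianPartition P R s))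
      ((Var[id; gaussianPosterior P R σ] + (∫ x, x ∂gaussianPosterior P R σ - R) ^ 2) / σ ^ 3)
      σ := by
  have hint : -(2 * σ ^ 2)⁻¹ ∈ interior (integrableExpSet (fun x => (x - R) ^ 2) P) :=
    Iio_zero_subset_interior_integrableExpSet (by fun_prop) (.of_forall fun x => sq_nonneg (x - R))
      (neg_lt_zero.2 (by positivity : 0 < (2 * σ ^ 2)⁻¹))
  have hcgf : HasDerivAt (cgf (fun x => (x - R) ^ 2) P)
      (∫ x, (x - R) ^ 2 ∂gaussianPosterior P R σ) (-(2 * σ ^ 2)⁻¹) := by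
    simp only [gaussianPosterior, neg_sub_sq_div_eq_mul]
    exact hasDerivAt_cgf hint
  have harg : HasDerivAt (fun s : ℝ => -(2 * s ^ 2)⁻¹) (1 / σ ^ 3) σ := by
    refine (((hasDerivAt_pow 2 σ).const_mul 2).inv (by positivity)).neg.congr_deriv ?_
    field_simp
    norm_num
  have hmoment : ∫ x, (x - R) ^ 2 ∂gaussianPosterior P R σ =
      Var[id; gaussianPosterior P R σ] + (∫ x, x ∂gaussianPosterior P R σ - R) ^ 2 :=
    integral_sub_const_sq (memLp_id_gaussianPosterior P R hσ) R
  rw [← hmoment, div_eq_mul_one_div]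
  refine (hcgf.comp σ harg).congr_of_eventuallyEq (.of_forall fun s => ?_)
  simp only [gaussianPartition, neg_sub_sq_div_eq_mul, Function.comp_apply, cgf, mgf]

end Posterior

/-- The contribution of one site to the free energy: minus the Kullback–Leibler divergence of
the posterior from the prior when `a` and `c` are the posterior mean and variance. -/
noncomputable def siteEntropy (P : Measure ℝ) (R σ a c : ℝ) : ℝ :=
  Real.log (gaussianPartition P R σ) + (c + (a - R) ^ 2) / (2 * σ ^ 2)

section SiteEntropy

variable (P : Measure ℝ) (R a c : ℝ) {σ : ℝ}

lemma hasDerivAt_siteEntropy_loc [IsFiniteMeasure P] [NeZero P] (hσ : σ ≠ 0) :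
    HasDerivAt (fun r => siteEntropy P r σ a c)
      ((∫ x, x ∂gaussianPosterior P R σ - a) / σ ^ 2) R := by
  have hquad := ((((hasDerivAt_id R).const_sub a).fun_pow 2).const_add c).div_const (2 * σ ^ 2)
  refine ((hasDerivAt_log_gaussianPartition_loc P R hσ).add hquad).congr_deriv ?_
  simp only [id]
  field_simp
  ring

lemma hasDerivAt_siteEntropy_scale [IsFiniteMeasure P] [NeZero P] (hσ : σ ≠ 0) :
    HasDerivAt (fun s => siteEntropy P R s a c)
      ((Var[id; gaussianPosterior P R σ] + (∫ x, x ∂gaussianPosterior P R σ - R) ^ 2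
        - (c + (a - R) ^ 2)) / σ ^ 3) σ := by
  have hquad := (hasDerivAt_const σ (c + (a - R) ^ 2)).fun_div
    ((hasDerivAt_pow 2 σ).const_mul 2) (by positivity)
  refine ((hasDerivAt_log_gaussianPartition_scale P R hσ).add hquad).congr_deriv ?_
  field_simp
  ring

variable (σ)

lemma hasDerivAt_siteEntropy_mean :
    HasDerivAt (fun t => siteEntropy P R σ t c) ((a - R) / σ ^ 2) a := by
  have hquad := ((((hasDerivAt_id a).sub_const R).fun_pow 2).const_add c).div_const (2 * σ ^ 2)
  refine (hquad.const_add (Real.log (gaussianPartition P R σ))).congr_deriv ?_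
  simp only [id]
  ring

lemma hasDerivAt_siteEntropy_variance :
    HasDerivAt (fun t => siteEntropy P R σ a t) (1 / (2 * σ ^ 2)) c :=
  (((hasDerivAt_id c).add_const _).div_const _).const_add _

end SiteEntropy

section FreeEnergy

variable {m n : Type*} [Fintype m] [Fintype n] (P : Measure ℝ) (F : m → n → ℝ) (y : m → ℝ)

/-- The expectation of `∑ μ, (y μ - ∑ i, F μ i * x i) ^ 2` over independent coordinates `x i`
with mean `a i` and variance `c i`. -/
noncomputable def expectedSqResidual (a c : n → ℝ) : ℝ :=
  ∑ μ, ((y μ - ∑ i, F μ i * a i) ^ 2 + ∑ i, F μ i ^ 2 * c i)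

/-- The unconstrained mean-field free energy for independent coordinates with an arbitrary common
prior `P`, in place of the Gauss–Bernoulli prior of `FMF`. -/
noncomputable def meanFieldEnergy (Δ : ℝ) (R S a c : n → ℝ) : ℝ :=
  (Fintype.card m : ℝ) / 2 * Real.log (2 * Real.pi * Δ)
    + 1 / (2 * Δ) * expectedSqResidual F y a c - ∑ i, siteEntropy P (R i) (S i) (a i) (c i)

variable [DecidableEq n] (Δ : ℝ) (R S a c : n → ℝ) (i : n)

lemma hasDerivAt_expectedSqResidual_mean :
    HasDerivAt (fun t => expectedSqResidual F y (Function.update a i t) c)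
      (-2 * ∑ μ, F μ i * (y μ - ∑ j, F μ j * a j)) (a i) := by
  rw [Finset.mul_sum]
  refine HasDerivAt.fun_sum fun μ _ => ?_
  have hlin := hasDerivAt_sum_update (g := fun j t => F μ j * t)
    ((hasDerivAt_id (a i)).const_mul (F μ i))
  refine (((hlin.const_sub (y μ)).fun_pow 2).add_const _).congr_deriv ?_
  simp only [Function.update_eq_self]
  ring

lemma hasDerivAt_expectedSqResidual_variance :
    HasDerivAt (fun t => expectedSqResidual F y a (Function.update c i t)) (∑ μ, F μ i ^ 2)
      (c i) := by
  refine HasDerivAt.fun_sum fun μ _ => ?_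
  have hlin := hasDerivAt_sum_update (g := fun j t => F μ j ^ 2 * t)
    ((hasDerivAt_id (c i)).const_mul (F μ i ^ 2))
  simpa using hlin.const_add ((y μ - ∑ j, F μ j * a j) ^ 2)

lemma hasDerivAt_meanFieldEnergy_loc_zero_iff [IsFiniteMeasure P] [NeZero P] (hi : S i ≠ 0) :
    HasDerivAt (fun t => meanFieldEnergy P F y Δ (Function.update R i t) S a c) 0 (R i) ↔
      a i = ∫ x, x ∂gaussianPosterior P (R i) (S i) := by
  have h := (hasDerivAt_sum_update (g := fun j t => siteEntropy P t (S j) (a j) (c j))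
    (hasDerivAt_siteEntropy_loc P (R i) (a i) (c i) hi)).const_sub
      (Fintype.card m / 2 * Real.log (2 * Real.pi * Δ) + 1 / (2 * Δ) * expectedSqResidual F y a c)
  refine (hasDerivAt_iff_eq h).trans ?_
  simp only [neg_eq_zero, div_eq_zero_iff, sub_eq_zero, pow_ne_zero 2 hi, or_false]
  exact eq_comm

lemma hasDerivAt_meanFieldEnergy_scale_zero_iff [IsFiniteMeasure P] [NeZero P] (hi : S i ≠ 0) :
    HasDerivAt (fun t => meanFieldEnergy P F y Δ R (Function.update S i t) a c) 0 (S i) ↔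
      c i + (a i - R i) ^ 2 = Var[id; gaussianPosterior P (R i) (S i)]
        + (∫ x, x ∂gaussianPosterior P (R i) (S i) - R i) ^ 2 := by
  have h := (hasDerivAt_sum_update (g := fun j t => siteEntropy P (R j) t (a j) (c j))
    (hasDerivAt_siteEntropy_scale P (R i) (a i) (c i) hi)).const_sub
      (Fintype.card m / 2 * Real.log (2 * Real.pi * Δ) + 1 / (2 * Δ) * expectedSqResidual F y a c)
  refine (hasDerivAt_iff_eq h).trans ?_
  simp only [neg_eq_zero, div_eq_zero_iff, sub_eq_zero, pow_ne_zero 3 hi, or_false]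
  exact eq_comm

variable {Δ}

lemma hasDerivAt_meanFieldEnergy_mean_zero_iff (hΔ : Δ ≠ 0) (hi : S i ≠ 0) :
    HasDerivAt (fun t => meanFieldEnergy P F y Δ R S (Function.update a i t) c) 0 (a i) ↔
      R i = a i + S i ^ 2 / Δ * ∑ μ, F μ i * (y μ - ∑ j, F μ j * a j) := by
  have hsite := hasDerivAt_sum_update (g := fun j t => siteEntropy P (R j) (S j) t (c j))
    (hasDerivAt_siteEntropy_mean P (R i) (a i) (c i) (S i))
  have h := (((hasDerivAt_expectedSqResidual_mean F y a c i).const_mul (1 / (2 * Δ))).const_add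
    (Fintype.card m / 2 * Real.log (2 * Real.pi * Δ))).sub hsite
  refine (hasDerivAt_iff_eq h).trans ?_
  generalize ∑ μ, F μ i * (y μ - ∑ j, F μ j * a j) = gradient
  field_simp
  constructor <;> intro <;> linarith

lemma hasDerivAt_meanFieldEnergy_variance_zero_iff (hΔ : Δ ≠ 0) (hi : S i ≠ 0) :
    HasDerivAt (fun t => meanFieldEnergy P F y Δ R S a (Function.update c i t)) 0 (c i) ↔
      1 / S i ^ 2 = ∑ μ, F μ i ^ 2 / Δ := by
  have hsite := hasDerivAt_sum_update (g := fun j t => siteEntropy P (R j) (S j) (a j) t)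
    (hasDerivAt_siteEntropy_variance P (R i) (a i) (c i) (S i))
  have h := (((hasDerivAt_expectedSqResidual_variance F y a c i).const_mul (1 / (2 * Δ))).const_add
    (Fintype.card m / 2 * Real.log (2 * Real.pi * Δ))).sub hsite
  refine (hasDerivAt_iff_eq h).trans ?_
  rw [← Finset.sum_div]
  field_simp
  constructor <;> intro <;> linarith

theorem stmt5_general [IsFiniteMeasure P] [NeZero P] (hΔ : 0 < Δ) (hS : ∀ i, S i ≠ 0) :
    ((∀ i, HasDerivAt
        (fun t => meanFieldEnergy P F y Δ (Function.update R i t) S a c) 0 (R i)) ∧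
     (∀ i, HasDerivAt
        (fun t => meanFieldEnergy P F y Δ R (Function.update S i t) a c) 0 (S i)) ∧
     (∀ i, HasDerivAt
        (fun t => meanFieldEnergy P F y Δ R S (Function.update a i t) c) 0 (a i)) ∧
     (∀ i, HasDerivAt
        (fun t => meanFieldEnergy P F y Δ R S a (Function.update c i t)) 0 (c i)))
    ↔ (∀ i,
        1 / S i ^ 2 = ∑ μ, F μ i ^ 2 / Δ ∧
        R i = a i + S i ^ 2 / Δ * ∑ μ, F μ i * (y μ - ∑ j, F μ j * a j) ∧
        a i = ∫ x, x ∂gaussianPosterior P (R i) (S i) ∧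
        c i = Var[id; gaussianPosterior P (R i) (S i)]) := by
  simp only [fun i => hasDerivAt_meanFieldEnergy_loc_zero_iff P F y Δ R S a c i (hS i),
    fun i => hasDerivAt_meanFieldEnergy_scale_zero_iff P F y Δ R S a c i (hS i),
    fun i => hasDerivAt_meanFieldEnergy_mean_zero_iff P F y R S a c i hΔ.ne' (hS i),
    fun i => hasDerivAt_meanFieldEnergy_variance_zero_iff P F y R S a c i hΔ.ne' (hS i),
    ← forall_and]
  refine forall_congr' fun i => ⟨?_, ?_⟩
  · rintro ⟨mean_eq, second_moment_eq, loc_eq, scale_eq⟩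
    rw [← mean_eq] at second_moment_eq
    exact ⟨scale_eq, loc_eq, mean_eq, add_right_cancel second_moment_eq⟩
  · rintro ⟨scale_eq, loc_eq, mean_eq, variance_eq⟩
    exact ⟨mean_eq, by rw [← mean_eq, variance_eq], loc_eq, scale_eq⟩

end FreeEnergy

lemma isProbabilityMeasure_P0 {ρ : ℝ} (hρ : ρ ∈ Set.Icc (0 : ℝ) 1) :
    IsProbabilityMeasure (P0 ρ) :=
  ⟨by simp [P0, ← ENNReal.ofReal_add hρ.1 (sub_nonneg.2 hρ.2)]⟩

lemma fa_eq_integral_gaussianPosterior (ρ R σ : ℝ) :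
    fa ρ R σ = ∫ x, x ∂gaussianPosterior (P0 ρ) R σ :=
  (integral_gaussianPosterior (P0 ρ) R σ fun x => x).symm

lemma fc_eq_variance_gaussianPosterior {ρ : ℝ} (hρ : ρ ∈ Set.Icc (0 : ℝ) 1) (R : ℝ) {σ : ℝ}
    (hσ : σ ≠ 0) : fc ρ R σ = Var[id; gaussianPosterior (P0 ρ) R σ] := by
  have := isProbabilityMeasure_P0 hρ
  rw [variance_eq_sub (memLp_id_gaussianPosterior (P0 ρ) R hσ), fc,
    fa_eq_integral_gaussianPosterior]
  congr 1
  exact (integral_gaussianPosterior (P0 ρ) R σ fun x => x ^ 2).symm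

lemma FMF_eq_meanFieldEnergy (ρ : ℝ) {M N : ℕ} (F : Fin M → Fin N → ℝ) (y : Fin M → ℝ) (Δ : ℝ)
    (R Sv a c : Fin N → ℝ) :
    FMF ρ F y Δ R Sv a c = meanFieldEnergy (P0 ρ) F y Δ R Sv a c := by
  rw [meanFieldEnergy, Fintype.card_fin]
  rfl

/-- a point `(R,Σ,a,c)` with all `Σ_i > 0` is a stationary point of the
unconstrained mean-field free energy (all partial derivatives w.r.t. each `R_i`, `Σ_i`,
`a_i`, `c_i` vanish) iff the mean-field fixed-point equations (i)–(iv) hold. -/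
theorem stmt5 (ρ : ℝ) (hρ : ρ ∈ Set.Icc (0 : ℝ) 1) {M N : ℕ}
    (F : Fin M → Fin N → ℝ) (y : Fin M → ℝ) (Δ : ℝ) (hΔ : 0 < Δ)
    (R Sv a c : Fin N → ℝ) (hS : ∀ i, 0 < Sv i) :
    ((∀ i, HasDerivAt (fun t => FMF ρ F y Δ (Function.update R i t) Sv a c) 0 (R i)) ∧
     (∀ i, HasDerivAt (fun t => FMF ρ F y Δ R (Function.update Sv i t) a c) 0 (Sv i)) ∧
     (∀ i, HasDerivAt (fun t => FMF ρ F y Δ R Sv (Function.update a i t) c) 0 (a i)) ∧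
     (∀ i, HasDerivAt (fun t => FMF ρ F y Δ R Sv a (Function.update c i t)) 0 (c i)))
    ↔ (∀ i,
        1 / Sv i ^ 2 = ∑ μ, F μ i ^ 2 / Δ ∧
        R i = a i + Sv i ^ 2 / Δ * ∑ μ, F μ i * (y μ - ∑ j, F μ j * a j) ∧
        a i = fa ρ (R i) (Sv i) ∧
        c i = fc ρ (R i) (Sv i)) := by
  have := isProbabilityMeasure_P0 hρ
  simpa only [FMF_eq_meanFieldEnergy, fa_eq_integral_gaussianPosterior,
    fun i => fc_eq_variance_gaussianPosterior hρ (R i) (hS i).ne']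
    using stmt5_general (P0 ρ) F y R Sv a c hΔ fun i => (hS i).ne'
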